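/- Let A be a finite-dimensional nilpotent associative algebra over ℂ. Then t(A) = 10 if and only if A is isomorphic to E ⊕ A(2) for some extra special algebra E of dimension 3, or to E ⊕ A(1) for some extra special algebra E of dimension 4, or A is an extra special algebra of dimension 5. -/

import Mathlib

/-!
Write `n = dim A`, `d = dim A'` and let `c` be the dimension of the space of cocycles. The
coboundaries are dual to `A'`, so `t(A) = n² + d - c` (`tInv_eq`), and the task is to bound `c`.

Suppose that `0` is the only idempotent of `A`; over a finite-dimensional algebra this is the usable
form of nilpotency. Then `A` lies in the Jacobson radical of its unitization, so a complement of
`A'` generates `A` (`eq_top_of_sup_derived`), and a cocycle is determined by its restriction to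
(complement of `A'`) `× A`. Hence `c ≤ (n - d) n`, that is `t(A) ≥ (n + 1) d`. If `t(A) = 10`, this
forces `d = 1`, except for `n = 4`, `d = 2`, `c = 8`, which is ruled out by
`finrank_cocycles_ne`.

If `d = 1` then `A' = ℂz` is central. A cocycle either factors through `A / A'` or pairs `A'`
nontrivially with `A`; the second kind exists only if the center has codimension one, and then
it is unique up to scalars and cocycles of the first kind. So `t(A) = 2n`, or `t(A) = 2n - 1` when the
center has codimension one. Therefore `t(A) = 10` means `n = 5` and `dim Z(A) ≤ 3`
(`tInv_eq_ten_iff_of_derived`). Splitting off a complement of `A'` in `Z(A)` leaves an extra special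
algebra (`hasExtraSpecialDecomp_of`), and `dim Z(A) = 3, 2, 1` gives the three cases.

Algebras with an idempotent `e ≠ 0` are treated as well (`tInv_ne_of_idem`): modulo coboundaries a
cocycle can be normalized to vanish on `eA × A` and `A × Ae`. Unless `eA = Ae = ℂe` this gives
`t(A) ≥ 4n - 4`, and `n ≥ 4`. If `eA = Ae = ℂe`, then `A = ℂe ⊕ N` with the same multiplier as `N`,
so `t(A) = t(N) + 2n - 1`, which is never `10`, since `t(N)` is `0` or at least `n`.
-/

open Module

noncomputable section Defs

variable (A : Type*) [NonUnitalRing A] [Module ℂ A]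

/-- `A` is nilpotent: there is an `n` such that every product of `n` elements of `A`
is zero (by associativity it suffices to consider left-normed products). -/
def IsNilpotentAlgebra : Prop :=
  ∃ n : ℕ, ∀ (x : A) (l : List A), l.length + 1 = n → l.foldl (· * ·) x = 0

/-- The derived ideal `A' = AA`: the linear span of all products in `A`. -/
def derivedIdeal : Submodule ℂ A :=
  Submodule.span ℂ {a : A | ∃ x y : A, x * y = a}

/-- The space of 2-cocycles: bilinear maps `f : A × A → ℂ` with `f(xy,z) = f(x,yz)`. -/
def Cocycles : Submodule ℂ (A →ₗ[ℂ] A →ₗ[ℂ] ℂ) where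
  carrier := {f | ∀ x y z : A, f (x * y) z = f x (y * z)}
  add_mem' := by
    intro f g hf hg x y z
    simp [hf x y z, hg x y z]
  zero_mem' := by
    intro x y z
    simp
  smul_mem' := by
    intro c f hf x y z
    simp [hf x y z]

/-- The space of 2-coboundaries: bilinear maps of the form `f(x,y) = g(xy)`. -/
def Coboundaries : Submodule ℂ (A →ₗ[ℂ] A →ₗ[ℂ] ℂ) where
  carrier := {f | ∃ g : A →ₗ[ℂ] ℂ, ∀ x y : A, f x y = g (x * y)}
  add_mem' := by
    rintro f₁ f₂ ⟨g₁, h₁⟩ ⟨g₂, h₂⟩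
    exact ⟨g₁ + g₂, fun x y => by simp [h₁ x y, h₂ x y]⟩
  zero_mem' := ⟨0, by simp⟩
  smul_mem' := by
    rintro c f ⟨g, h⟩
    exact ⟨c • g, fun x y => by simp [h x y]⟩

/-- The dimension of the multiplier `M(A) = H²(A, ℂ)`, the quotient of the cocycles
by the coboundaries. -/
def multDim : ℕ :=
  Module.finrank ℂ ((Cocycles A).map (Coboundaries A).mkQ)

/-- `t(A) = (dim A)² - dim M(A)`. -/
def tInv : ℤ :=
  (Module.finrank ℂ A : ℤ) ^ 2 - (multDim A : ℤ)

/-- A (two-sided) ideal of `A`. -/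
def IsIdealOf (I : Submodule ℂ A) : Prop :=
  ∀ a : A, ∀ x ∈ I, a * x ∈ I ∧ x * a ∈ I

/-- `A ≅ J₁ ⊕ A(k)`: `A` has a basis `x, z, a₁, …, a_k` whose only nonzero
product of basis vectors is `x·x = z`. -/
def IsJ1SumAbelian (k : ℕ) : Prop :=
  ∃ b : Basis (Fin (k + 2)) ℂ A,
    b 0 * b 0 = b 1 ∧ ∀ i j : Fin (k + 2), ¬(i = 0 ∧ j = 0) → b i * b j = 0

/-- `A ≅ J₁`: `A` has a basis `x, z` with only nonzero product `x·x = z`. -/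
def IsJ1 : Prop := IsJ1SumAbelian A 0

/-- `A ≅ C₃`: `A` has a basis `x, z, z'` with only nonzero products
`x·x = z`, `x·z = z·x = z'`. -/
def IsC3 : Prop :=
  ∃ b : Basis (Fin 3) ℂ A,
    b 0 * b 0 = b 1 ∧ b 0 * b 1 = b 2 ∧ b 1 * b 0 = b 2 ∧
    b 0 * b 2 = 0 ∧ b 2 * b 0 = 0 ∧ b 1 * b 1 = 0 ∧ b 1 * b 2 = 0 ∧
    b 2 * b 1 = 0 ∧ b 2 * b 2 = 0

variable [SMulCommClass ℂ A A] [IsScalarTower ℂ A A]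

/-- The center `Z(A) = {z : za = az = 0 for all a}`. -/
def centerSub : Submodule ℂ A where
  carrier := {z | ∀ a : A, z * a = 0 ∧ a * z = 0}
  add_mem' := by
    intro x y hx hy a
    constructor
    · rw [add_mul, (hx a).1, (hy a).1, add_zero]
    · rw [mul_add, (hx a).2, (hy a).2, add_zero]
  zero_mem' := by
    intro a
    simp
  smul_mem' := by
    intro c x hx a
    constructor
    · rw [smul_mul_assoc, (hx a).1, smul_zero]
    · rw [mul_smul_comm, (hx a).2, smul_zero]

/-- `A` is extra special: `Z(A) = A'` and `dim Z(A) = 1`. -/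
def IsExtraSpecialAlg : Prop :=
  centerSub A = derivedIdeal A ∧ Module.finrank ℂ (centerSub A) = 1

/-- `A ≅ E ⊕ A(k)` for some extra special algebra `E` of dimension `n`:
`A` decomposes as an internal direct sum of a subalgebra `E` which is extra special
of dimension `n` and a central subspace `Z` of dimension `k` all of whose products
with `A` vanish. -/
def HasExtraSpecialDecomp (n k : ℕ) : Prop :=
  ∃ (E : NonUnitalSubalgebra ℂ A) (Z : Submodule ℂ A),
    IsCompl E.toSubmodule Z ∧ (∀ z ∈ Z, ∀ a : A, z * a = 0 ∧ a * z = 0) ∧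
    IsExtraSpecialAlg ↥E ∧ Module.finrank ℂ ↥E = n ∧ Module.finrank ℂ ↥Z = k

end Defs

section Aux

variable {A : Type*} [NonUnitalRing A] [Module ℂ A] [SMulCommClass ℂ A A] [IsScalarTower ℂ A A]
  [FiniteDimensional ℂ A]

/-! ### Nilpotency from the absence of idempotents -/

omit [SMulCommClass ℂ A A] [IsScalarTower ℂ A A] in
lemma finite_unitization : FiniteDimensional ℂ (Unitization ℂ A) :=
  Module.Finite.equiv (Unitization.linearEquiv ℂ ℂ A).symm

/-- If `0` is the only idempotent, every element is nilpotent: factor a polynomial annihilating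
`a` as `X ^ (k + 1) * q` with `q 0 ≠ 0`; the Bézout relation yields an idempotent in `ℂ[a] a`. -/
lemma isNilpotent_inr (h : ∀ e : A, e * e = e → e = 0) (a : A) :
    IsNilpotent (a : Unitization ℂ A) := by
  have := finite_unitization (A := A)
  open Polynomial in
  set x : Unitization ℂ A := (a : Unitization ℂ A) with hx
  have hint : IsIntegral ℂ x := Algebra.IsIntegral.isIntegral x
  obtain ⟨q, hq, hnd⟩ :=
    exists_eq_pow_rootMultiplicity_mul_and_not_dvd (minpoly ℂ x) (minpoly.ne_zero hint) 0
  set k := rootMultiplicity 0 (minpoly ℂ x)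
  rw [C_0, sub_zero] at hq hnd
  have hcop : IsCoprime (X ^ (k + 1) : ℂ[X]) q :=
    IsCoprime.pow_left ((irreducible_X.coprime_iff_not_dvd).2 hnd)
  obtain ⟨u, v, huv⟩ := hcop
  have h0 : aeval x (X ^ (k + 1) * q) = 0 := by
    have : (X ^ (k + 1) * q : ℂ[X]) = X * minpoly ℂ x := by rw [hq]; ring
    rw [this, map_mul, minpoly.aeval, mul_zero]
  have huv' : aeval x (u * X ^ (k + 1)) + aeval x (v * q) = 1 := by
    rw [← map_add, huv, map_one]
  have hmul : aeval x (u * X ^ (k + 1)) * aeval x (v * q) = 0 := by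
    rw [← map_mul, show u * X ^ (k + 1) * (v * q) = u * v * (X ^ (k + 1) * q) by ring, map_mul,
      h0, mul_zero]
  set E := aeval x (u * X ^ (k + 1)) with hE
  have hEE : E * E = E := by
    have h1 := congrArg (fun t => E * t) huv'
    simp only [mul_add, hmul, add_zero, mul_one] at h1
    exact h1
  have hfst : E.fst = 0 := by
    rw [hE, map_mul, map_pow, aeval_X, pow_succ, Unitization.fst_mul, Unitization.fst_mul, hx,
      Unitization.fst_inr, mul_zero, mul_zero]
  have hEs : E = (E.snd : Unitization ℂ A) := by
    ext
    · simp [hfst]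
    · simp
  have hs : E.snd * E.snd = E.snd := by
    apply Unitization.inr_injective (R := ℂ)
    rw [Unitization.inr_mul, ← hEs, hEE]
  have hE0 : E = 0 := by rw [hEs, h _ hs, Unitization.inr_zero]
  rw [hE0, zero_add] at huv'
  refine ⟨k + 1, ?_⟩
  calc x ^ (k + 1) = x ^ (k + 1) * aeval x (v * q) := by rw [huv', mul_one]
    _ = aeval x v * aeval x (X ^ (k + 1) * q) := by
        rw [← map_mul, show v * (X ^ (k + 1) * q) = X ^ (k + 1) * (v * q) by ring,
          map_mul _ (X ^ (k + 1)), map_pow, aeval_X]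
    _ = 0 := by rw [h0, mul_zero]

/-- Left multiples of `a` in the unitization lie in `A`, hence are nilpotent. -/
lemma inr_mem_jacobson (h : ∀ e : A, e * e = e → e = 0) (a : A) :
    (a : Unitization ℂ A) ∈ (⊥ : Ideal (Unitization ℂ A)).jacobson := by
  rw [Ideal.mem_jacobson_iff]
  intro y
  have h1 : y * (a : Unitization ℂ A) = ((y * (a : Unitization ℂ A)).snd : Unitization ℂ A) := by
    ext
    · simp
    · simp
  have h2 : IsNilpotent (y * (a : Unitization ℂ A)) := by
    rw [h1]; exact isNilpotent_inr h _
  obtain ⟨z, hz⟩ := h2.isUnit_add_one.exists_left_inv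
  refine ⟨z, ?_⟩
  rw [mul_assoc, Ideal.mem_bot, sub_eq_zero, ← hz, mul_add, mul_one]

/-- Nakayama's lemma: without nonzero idempotents, a right ideal that supplements `A'` is
everything. -/
lemma eq_top_of_sup_derived (h : ∀ e : A, e * e = e → e = 0) (W : Submodule ℂ A)
    (hW : ∀ a ∈ W, ∀ b : A, a * b ∈ W) (hsup : W ⊔ derivedIdeal A = ⊤) : W = ⊤ := by
  have := finite_unitization (A := A)
  have : IsArtinianRing (Unitization ℂ A) := IsArtinianRing.of_finite ℂ _
  set J := (⊥ : Ideal (Unitization ℂ A)).jacobson with hJ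
  obtain ⟨n, hn⟩ := IsArtinianRing.isNilpotent_jacobson_bot (R := Unitization ℂ A)
  let P : ℕ → Submodule ℂ A := fun k =>
    ((J ^ k).restrictScalars ℂ).comap (Unitization.inrHom ℂ ℂ A)
  have hP : ∀ k (a : A), a ∈ P k ↔ (a : Unitization ℂ A) ∈ J ^ k := fun k a => Iff.rfl
  have key : ∀ k, W ⊔ P (k + 1) = ⊤ := by
    intro k
    induction k with
    | zero =>
      rw [eq_top_iff]
      intro a _
      refine Submodule.mem_sup_right ?_
      rw [hP, zero_add, Submodule.pow_one]
      exact inr_mem_jacobson h a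
    | succ k ih =>
      rw [eq_top_iff, ← hsup]
      refine sup_le le_sup_left ?_
      rw [derivedIdeal, Submodule.span_le]
      rintro _ ⟨x, y, rfl⟩
      obtain ⟨w, hw, p, hp, rfl⟩ := Submodule.mem_sup.1 (ih ▸ Submodule.mem_top : x ∈ W ⊔ P (k + 1))
      rw [add_mul]
      refine Submodule.add_mem_sup (hW w hw y) ?_
      rw [hP] at hp ⊢
      rw [Unitization.inr_mul, Submodule.pow_succ J (n := k + 1)]
      exact Ideal.mul_mem_mul hp (inr_mem_jacobson h y)
  have hbot : P (n + 1) = ⊥ := by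
    rw [eq_bot_iff]
    intro a ha
    rw [hP, Submodule.pow_succ, hn, Ideal.zero_eq_bot, Ideal.bot_mul] at ha
    exact Unitization.inr_injective (R := ℂ) ha
  simpa [hbot] using key n

/-! ### Dimension counts for spaces of bilinear forms -/

section Forms

variable {V : Type*} [AddCommGroup V] [Module ℂ V]

/-- The restriction of bilinear forms to `C × C'`. -/
def restrictForm (C C' : Submodule ℂ V) :
    (V →ₗ[ℂ] V →ₗ[ℂ] ℂ) →ₗ[ℂ] (C →ₗ[ℂ] C' →ₗ[ℂ] ℂ) where
  toFun f := f.compl₁₂ C.subtype C'.subtype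
  map_add' f g := by ext; simp
  map_smul' c f := by ext; simp

@[simp] lemma restrictForm_apply (C C' : Submodule ℂ V) (f : V →ₗ[ℂ] V →ₗ[ℂ] ℂ) (x : C) (y : C') :
    restrictForm C C' f x y = f x y := rfl

lemma restrict_injective {C C' : Submodule ℂ V} {S : Submodule ℂ (V →ₗ[ℂ] V →ₗ[ℂ] ℂ)}
    (h : ∀ f ∈ S, (∀ x ∈ C, ∀ y ∈ C', f x y = 0) → f = 0) :
    Function.Injective ((restrictForm C C').comp S.subtype) := by
  refine (injective_iff_map_eq_zero _).2 ?_
  rintro ⟨f, hf⟩ hk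
  rw [Submodule.mk_eq_zero]
  refine h f hf fun x hx y hy => ?_
  exact congrArg (fun g => g ⟨x, hx⟩ ⟨y, hy⟩) hk

variable [FiniteDimensional ℂ V]

lemma finrank_forms (C C' : Submodule ℂ V) :
    finrank ℂ (C →ₗ[ℂ] C' →ₗ[ℂ] ℂ) = finrank ℂ C * finrank ℂ C' := by
  simp [Module.finrank_linearMap]

lemma finrank_le_of_restrict {C C' : Submodule ℂ V} {S : Submodule ℂ (V →ₗ[ℂ] V →ₗ[ℂ] ℂ)}
    (h : ∀ f ∈ S, (∀ x ∈ C, ∀ y ∈ C', f x y = 0) → f = 0) :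
    finrank ℂ S ≤ finrank ℂ C * finrank ℂ C' := by
  rw [← finrank_forms]
  exact LinearMap.finrank_le_finrank_of_injective (restrict_injective h)

lemma surjective_of_injective_of_finrank_eq {X Y : Type*} [AddCommGroup X] [Module ℂ X]
    [FiniteDimensional ℂ X] [AddCommGroup Y] [Module ℂ Y] [FiniteDimensional ℂ Y]
    (L : X →ₗ[ℂ] Y) (hL : Function.Injective L) (h : finrank ℂ X = finrank ℂ Y) :
    Function.Surjective L :=
  (LinearMap.injective_iff_surjective_of_finrank_eq_finrank h).1 hL

lemma exists_extend_of_restrict {C C' : Submodule ℂ V} {S : Submodule ℂ (V →ₗ[ℂ] V →ₗ[ℂ] ℂ)}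
    (h : ∀ f ∈ S, (∀ x ∈ C, ∀ y ∈ C', f x y = 0) → f = 0)
    (heq : finrank ℂ S = finrank ℂ C * finrank ℂ C') (φ ψ : V →ₗ[ℂ] ℂ) :
    ∃ f ∈ S, ∀ x ∈ C, ∀ y ∈ C', f x y = φ x * ψ y := by
  rw [← finrank_forms] at heq
  have hinj := restrict_injective h
  have hs := surjective_of_injective_of_finrank_eq (X := S) (Y := C →ₗ[ℂ] C' →ₗ[ℂ] ℂ)
    ((restrictForm C C').comp S.subtype)
  have hs := hs hinj heq
  obtain ⟨⟨f, hf⟩, hfe⟩ := hs (restrictForm C C' ((LinearMap.mul ℂ ℂ).compl₁₂ φ ψ))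
  refine ⟨f, hf, fun x hx y hy => ?_⟩
  exact congrArg (fun g => g ⟨x, hx⟩ ⟨y, hy⟩) hfe

/-- Forms vanishing on `U × V` and `V × U'` live on `(V ⧸ U) × (V ⧸ U')`. -/
lemma finrank_le_of_vanish {U U' : Submodule ℂ V} {S : Submodule ℂ (V →ₗ[ℂ] V →ₗ[ℂ] ℂ)}
    (h : ∀ f ∈ S, ∀ u ∈ U, ∀ a, f u a = 0) (h' : ∀ f ∈ S, ∀ u ∈ U', ∀ a, f a u = 0) :
    finrank ℂ S ≤ (finrank ℂ V - finrank ℂ U) * (finrank ℂ V - finrank ℂ U') := by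
  obtain ⟨C, hC⟩ := U.exists_isCompl
  obtain ⟨C', hC'⟩ := U'.exists_isCompl
  have e := Submodule.finrank_add_eq_of_isCompl hC
  have e' := Submodule.finrank_add_eq_of_isCompl hC'
  rw [show finrank ℂ V - finrank ℂ U = finrank ℂ C by omega,
    show finrank ℂ V - finrank ℂ U' = finrank ℂ C' by omega]
  refine finrank_le_of_restrict fun f hf hz => ?_
  ext a b
  obtain ⟨u, hu, c, hc, rfl⟩ := Submodule.mem_sup.1 (hC.sup_eq_top ▸ Submodule.mem_top : a ∈ U ⊔ C)
  obtain ⟨u', hu', c', hc', rfl⟩ :=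
    Submodule.mem_sup.1 (hC'.sup_eq_top ▸ Submodule.mem_top : b ∈ U' ⊔ C')
  simp [h f hf u hu, h' f hf u' hu', hz c hc c' hc']

end Forms

omit [SMulCommClass ℂ A A] [IsScalarTower ℂ A A] [FiniteDimensional ℂ A] in
lemma mul_mem_derived (x y : A) : x * y ∈ derivedIdeal A := Submodule.subset_span ⟨x, y, rfl⟩

omit [SMulCommClass ℂ A A] [IsScalarTower ℂ A A] [FiniteDimensional ℂ A] in
lemma mem_cocycles {f : A →ₗ[ℂ] A →ₗ[ℂ] ℂ} :
    f ∈ Cocycles A ↔ ∀ x y z : A, f (x * y) z = f x (y * z) := Iff.rfl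

omit [SMulCommClass ℂ A A] [IsScalarTower ℂ A A] [FiniteDimensional ℂ A] in
lemma mem_coboundaries {f : A →ₗ[ℂ] A →ₗ[ℂ] ℂ} :
    f ∈ Coboundaries A ↔ ∃ g : A →ₗ[ℂ] ℂ, ∀ x y : A, f x y = g (x * y) := Iff.rfl

omit [SMulCommClass ℂ A A] [IsScalarTower ℂ A A] in
/-- Every form that kills `A'` on both sides is a cocycle. -/
lemma exists_le_cocycles :
    ∃ S ≤ Cocycles A, (∀ f ∈ S, ∀ u ∈ derivedIdeal A, ∀ a, f u a = 0) ∧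
      (finrank ℂ A - finrank ℂ (derivedIdeal A)) ^ 2 ≤ finrank ℂ S := by
  set D := derivedIdeal A
  let Φ : ((A ⧸ D) →ₗ[ℂ] (A ⧸ D) →ₗ[ℂ] ℂ) →ₗ[ℂ] (A →ₗ[ℂ] A →ₗ[ℂ] ℂ) :=
    { toFun := fun f => f.compl₁₂ D.mkQ D.mkQ
      map_add' := fun f g => by ext; simp
      map_smul' := fun c f => by ext; simp }
  have hΦ : ∀ f, Φ f ∈ Cocycles A := by
    intro f x y z
    have h1 : D.mkQ (x * y) = 0 := (Submodule.Quotient.mk_eq_zero D).2 (mul_mem_derived x y)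
    have h2 : D.mkQ (y * z) = 0 := (Submodule.Quotient.mk_eq_zero D).2 (mul_mem_derived y z)
    change f (D.mkQ (x * y)) (D.mkQ z) = f (D.mkQ x) (D.mkQ (y * z))
    rw [h1, h2]
    simp
  have hinj : Function.Injective Φ := by
    intro f g hfg
    refine LinearMap.ext fun x => LinearMap.ext fun y => ?_
    obtain ⟨x, rfl⟩ := D.mkQ_surjective x
    obtain ⟨y, rfl⟩ := D.mkQ_surjective y
    exact congrArg (fun t => t x y) hfg
  refine ⟨LinearMap.range Φ, ?_, ?_, ?_⟩
  · rintro _ ⟨f, rfl⟩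
    exact hΦ f
  · rintro _ ⟨f, rfl⟩ u hu a
    have h1 : D.mkQ u = 0 := (Submodule.Quotient.mk_eq_zero D).2 hu
    change f (D.mkQ u) (D.mkQ a) = 0
    rw [h1, map_zero, LinearMap.zero_apply]
  · have hq := D.finrank_quotient_add_finrank
    rw [LinearMap.finrank_range_of_inj hinj, Module.finrank_linearMap, Module.finrank_linearMap,
      Module.finrank_self, show finrank ℂ A - finrank ℂ D = finrank ℂ (A ⧸ D) by omega]
    simp [sq]

omit [SMulCommClass ℂ A A] [IsScalarTower ℂ A A] in
lemma le_finrank_cocycles :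
    (finrank ℂ A - finrank ℂ (derivedIdeal A)) ^ 2 ≤ finrank ℂ (Cocycles A) := by
  obtain ⟨S, hS, -, h⟩ := exists_le_cocycles (A := A)
  exact h.trans (Submodule.finrank_mono hS)

lemma finrank_coboundaries : finrank ℂ (Coboundaries A) = finrank ℂ (derivedIdeal A) := by
  let Φ : (A →ₗ[ℂ] ℂ) →ₗ[ℂ] (A →ₗ[ℂ] A →ₗ[ℂ] ℂ) :=
    { toFun := fun g => (LinearMap.mul ℂ A).compr₂ g
      map_add' := fun f g => by ext; simp
      map_smul' := fun c f => by ext; simp }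
  have hr : LinearMap.range Φ = Coboundaries A := by
    ext f
    constructor
    · rintro ⟨g, rfl⟩
      exact ⟨g, fun x y => rfl⟩
    · rintro ⟨g, hg⟩
      exact ⟨g, by ext x y; exact (hg x y).symm⟩
  have hk : LinearMap.ker Φ = (derivedIdeal A).dualAnnihilator := by
    ext g
    rw [LinearMap.mem_ker, Submodule.mem_dualAnnihilator]
    constructor
    · intro h w hw
      have : derivedIdeal A ≤ LinearMap.ker g := by
        rw [derivedIdeal, Submodule.span_le]
        rintro _ ⟨x, y, rfl⟩
        exact congrArg (fun t => t x y) h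
      exact this hw
    · intro h
      ext x y
      exact h _ (mul_mem_derived x y)
  have h1 := LinearMap.finrank_range_add_finrank_ker Φ
  have h2 := Subspace.finrank_add_finrank_dualAnnihilator_eq (derivedIdeal A)
  have h3 : finrank ℂ (A →ₗ[ℂ] ℂ) = finrank ℂ A := Subspace.dual_finrank_eq
  rw [hr, hk, h3, ← h2] at h1
  exact Nat.add_right_cancel h1

omit [SMulCommClass ℂ A A] [IsScalarTower ℂ A A] [FiniteDimensional ℂ A] in
lemma coboundaries_le : Coboundaries A ≤ Cocycles A := by
  rintro f ⟨g, hg⟩ x y z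
  rw [hg, hg, mul_assoc]

/-- Rank-nullity for a linear map modulo a subspace. -/
lemma finrank_map_mkQ {V : Type*} [AddCommGroup V] [Module ℂ V] [FiniteDimensional ℂ V]
    {Z B : Submodule ℂ V} (hBZ : B ≤ Z) :
    finrank ℂ (Z.map B.mkQ) + finrank ℂ B = finrank ℂ Z := by
  have h1 := LinearMap.finrank_range_add_finrank_ker (B.mkQ.domRestrict Z)
  rw [LinearMap.range_domRestrict, LinearMap.ker_domRestrict, Submodule.ker_mkQ] at h1
  rw [← h1, (Submodule.comapSubtypeEquivOfLe hBZ).finrank_eq]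

/-- A linear map carrying `Z₁` into `Z₂` that is injective modulo `B₁` and `B₂`. -/
lemma finrank_map_mkQ_le {V W : Type*} [AddCommGroup V] [Module ℂ V] [FiniteDimensional ℂ V]
    [AddCommGroup W] [Module ℂ W] [FiniteDimensional ℂ W]
    {Z₁ B₁ : Submodule ℂ V} {Z₂ B₂ : Submodule ℂ W} (hBZ : B₁ ≤ Z₁) (Φ : V →ₗ[ℂ] W)
    (hZ : ∀ f ∈ Z₁, Φ f ∈ Z₂) (hB : ∀ f ∈ Z₁, Φ f ∈ B₂ → f ∈ B₁) :
    finrank ℂ (Z₁.map B₁.mkQ) ≤ finrank ℂ (Z₂.map B₂.mkQ) := by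
  have h0 := finrank_map_mkQ hBZ
  have h1 := LinearMap.finrank_range_add_finrank_ker ((B₂.mkQ.comp Φ).domRestrict Z₁)
  have h2 : LinearMap.range ((B₂.mkQ.comp Φ).domRestrict Z₁) ≤ Z₂.map B₂.mkQ := by
    rintro _ ⟨f, rfl⟩
    exact ⟨Φ f, hZ f f.2, rfl⟩
  have h3 : (LinearMap.ker ((B₂.mkQ.comp Φ).domRestrict Z₁)) ≤ B₁.comap Z₁.subtype := by
    intro f hf
    exact hB f f.2 ((Submodule.Quotient.mk_eq_zero B₂).1 hf)
  have h4 := Submodule.finrank_mono h2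
  have h5 := Submodule.finrank_mono h3
  rw [(Submodule.comapSubtypeEquivOfLe hBZ).finrank_eq] at h5
  omega

lemma multDim_add : multDim A + finrank ℂ (derivedIdeal A) = finrank ℂ (Cocycles A) := by
  rw [← finrank_coboundaries]
  exact finrank_map_mkQ coboundaries_le

omit [SMulCommClass ℂ A A] [IsScalarTower ℂ A A] in
lemma finrank_cocycles_le : finrank ℂ (Cocycles A) ≤ finrank ℂ A ^ 2 := by
  have := finrank_le_of_vanish (V := A) (U := ⊥) (U' := ⊥) (S := Cocycles A)
    (by rintro f _ u hu a; rw [(Submodule.mem_bot ℂ).1 hu]; simp)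
    (by rintro f _ u hu a; rw [(Submodule.mem_bot ℂ).1 hu]; simp)
  simpa [sq] using this

lemma tInv_eq : tInv A =
    (finrank ℂ A : ℤ) ^ 2 + finrank ℂ (derivedIdeal A) - finrank ℂ (Cocycles A) := by
  have := multDim_add (A := A)
  rw [tInv, ← this]
  push_cast
  ring

omit [SMulCommClass ℂ A A] [IsScalarTower ℂ A A] in
lemma finrank_derived_le : finrank ℂ (derivedIdeal A) ≤ finrank ℂ A := Submodule.finrank_le _

/-! ### Algebras without nonzero idempotents -/

/-- The generators of `A`, spanning a complement of `A'`, determine a cocycle in its first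
argument. -/
lemma cocycle_eq_zero_of_generators (h : ∀ e : A, e * e = e → e = 0) {C : Submodule ℂ A}
    (hC : IsCompl C (derivedIdeal A)) (f) (hf : f ∈ Cocycles A)
    (hz : ∀ x ∈ C, ∀ y ∈ (⊤ : Submodule ℂ A), f x y = 0) : f = 0 := by
  have htop : LinearMap.ker f = ⊤ := by
    refine eq_top_of_sup_derived h _ (fun a ha b => ?_) ?_
    · rw [LinearMap.mem_ker] at ha ⊢
      ext c
      rw [mem_cocycles.1 hf, ha]
      rfl
    · rw [eq_top_iff, ← hC.sup_eq_top]
      refine sup_le_sup_right (fun x hx => ?_) _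
      rw [LinearMap.mem_ker]
      ext y
      exact hz x hx y trivial
  exact LinearMap.ker_eq_top.1 htop

lemma finrank_cocycles_le_of_noIdem (h : ∀ e : A, e * e = e → e = 0) :
    finrank ℂ (Cocycles A) ≤ (finrank ℂ A - finrank ℂ (derivedIdeal A)) * finrank ℂ A := by
  obtain ⟨C, hC⟩ := (derivedIdeal A).exists_isCompl
  have e := Submodule.finrank_add_eq_of_isCompl hC
  rw [show finrank ℂ A - finrank ℂ (derivedIdeal A) = finrank ℂ C by omega]
  have := finrank_le_of_restrict (C := C) (C' := ⊤) (S := Cocycles A)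
    (cocycle_eq_zero_of_generators h hC.symm)
  rwa [finrank_top] at this

/-- In the case `dim A = 4`, `dim A' = 2` the bound `8` on the dimension of the cocycles is not
attained. Otherwise every form `φ ⊗ ψ` on `C × A`, with `C` a complement of `A'`, would come from a
cocycle; a linear relation between the four products of generators then gives a nonzero `w ∈ C`
with `w A = 0`, and using it once more shows `A A = 0`. -/
lemma finrank_cocycles_ne (h : ∀ e : A, e * e = e → e = 0) (hn : finrank ℂ A = 4)
    (hd : finrank ℂ (derivedIdeal A) = 2) : finrank ℂ (Cocycles A) ≠ 8 := by
  intro h8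
  obtain ⟨C, hC⟩ := (derivedIdeal A).exists_isCompl
  have e := Submodule.finrank_add_eq_of_isCompl hC
  have hc : finrank ℂ C = 2 := by omega
  have hext : ∀ φ ψ : A →ₗ[ℂ] ℂ, ∃ f ∈ Cocycles A, ∀ x ∈ C, ∀ y, f x y = φ x * ψ y := by
    intro φ ψ
    obtain ⟨f, hf, hfe⟩ := exists_extend_of_restrict (C := C) (C' := ⊤) (S := Cocycles A)
      (cocycle_eq_zero_of_generators h hC.symm)
      (by rw [finrank_top, h8, hc, hn]) φ ψ
    exact ⟨f, hf, fun x hx y => hfe x hx y trivial⟩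
  obtain ⟨w, hwC, hw0, hw⟩ : ∃ w ∈ C, w ≠ 0 ∧ ∀ z, w * z = 0 := by
    let b : Basis (Fin 2) ℂ C := Module.finBasisOfFinrankEq ℂ C hc
    let p : Fin 2 × Fin 2 → derivedIdeal A := fun ij => ⟨b ij.1 * b ij.2, mul_mem_derived _ _⟩
    have hp : ¬ LinearIndependent ℂ p := by
      intro hl
      have := hl.fintype_card_le_finrank
      rw [hd] at this
      simp at this
    obtain ⟨g, hg, ⟨i, j⟩, hij⟩ := Fintype.not_linearIndependent_iff.1 hp
    have hg' : ∑ i, ∑ j, g (i, j) • ((b i : A) * b j) = 0 := by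
      have := congrArg (derivedIdeal A).subtype hg
      rw [map_sum, Fintype.sum_prod_type] at this
      simpa [p] using this
    refine ⟨∑ j, g (i, j) • (b j : A), C.sum_mem fun j _ => C.smul_mem _ (b j).2, ?_, ?_⟩
    · intro h0
      have h0' : ∑ j, g (i, j) • b j = 0 := by
        apply Subtype.ext
        simpa using h0
      exact hij (Fintype.linearIndependent_iff.1 b.linearIndependent _ h0' j)
    · intro z
      obtain ⟨φ, hφ⟩ := LinearMap.exists_extend (b.coord i)
      have hφb : ∀ k, φ (b k) = if k = i then 1 else 0 := by
        intro k
        have := congrArg (fun t => t (b k)) hφ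
        simpa [Finsupp.single_apply] using this
      refine (Module.forall_dual_apply_eq_zero_iff ℂ _).1 fun ψ => ?_
      obtain ⟨f, hf, hfe⟩ := hext φ ψ
      have h1 : f (∑ i, ∑ j, g (i, j) • ((b i : A) * b j)) z = 0 := by rw [hg']; simp
      simp only [map_sum, map_smul, LinearMap.sum_apply, LinearMap.smul_apply,
        mem_cocycles.1 hf, hfe _ (b _).2, hφb] at h1
      rw [Finset.sum_eq_single i (fun k _ hk => by simp [hk]) (by simp)] at h1
      simpa [Finset.sum_mul, smul_mul_assoc, add_mul] using h1
  obtain ⟨φ, hφ⟩ : ∃ φ : A →ₗ[ℂ] ℂ, φ w ≠ 0 := by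
    by_contra! hcon
    exact hw0 ((Module.forall_dual_apply_eq_zero_iff ℂ _).1 hcon)
  have hzero : ∀ v z : A, v * z = 0 := by
    intro v z
    refine (Module.forall_dual_apply_eq_zero_iff ℂ _).1 fun ψ => ?_
    obtain ⟨f, hf, hfe⟩ := hext φ ψ
    have h1 := mem_cocycles.1 hf w v z
    rw [hw, hfe w hwC, map_zero, LinearMap.zero_apply] at h1
    exact (mul_eq_zero.1 h1.symm).resolve_left hφ
  have : derivedIdeal A = ⊥ := by
    rw [derivedIdeal, Submodule.span_eq_bot]
    rintro _ ⟨x, y, rfl⟩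
    exact hzero x y
  rw [this] at hd
  simp at hd

/-! ### Algebras with a nonzero idempotent -/

omit [FiniteDimensional ℂ A] in
/-- The cocycles `f` with `f (eA, A) = 0 = f (A, Ae)`. -/
def normCocycles (e : A) : Submodule ℂ (A →ₗ[ℂ] A →ₗ[ℂ] ℂ) where
  carrier := {f | f ∈ Cocycles A ∧ (∀ a b, f (e * a) b = 0) ∧ ∀ a b, f a (b * e) = 0}
  add_mem' := by
    rintro f g ⟨hf, h1, h2⟩ ⟨hg, h3, h4⟩
    exact ⟨add_mem hf hg, fun a b => by simp [h1, h3], fun a b => by simp [h2, h4]⟩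
  zero_mem' := ⟨zero_mem _, by simp, by simp⟩
  smul_mem' := by
    rintro c f ⟨hf, h1, h2⟩
    exact ⟨Submodule.smul_mem _ c hf, fun a b => by simp [h1], fun a b => by simp [h2]⟩

/-- Every cocycle is cohomologous to one that vanishes on `eA × A` and on `A × Ae`. -/
lemma multDim_le_normCocycles {e : A} (he : e * e = e) :
    multDim A ≤ finrank ℂ (normCocycles e) := by
  have hle : (Cocycles A).map (Coboundaries A).mkQ ≤
      (normCocycles e).map (Coboundaries A).mkQ := by
    rintro _ ⟨f, hf, rfl⟩
    have hf' := mem_cocycles.1 hf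
    let G : A →ₗ[ℂ] ℂ :=
      f e + f.flip e - (f e).comp (LinearMap.mulRight ℂ e)
    have hG : ∀ x, G x = f e x + f x e - f e (x * e) := fun x => rfl
    let c : A →ₗ[ℂ] A →ₗ[ℂ] ℂ := (LinearMap.mul ℂ A).compr₂ G
    have hcv : ∀ x y, c x y = G (x * y) := fun x y => rfl
    have hc : c ∈ Coboundaries A := ⟨G, hcv⟩
    have hee : ∀ x, f e (e * x) = f e x := fun x => by rw [← hf', he]
    have hee' : ∀ x, f (x * e) e = f x e := fun x => by rw [hf', he]
    refine ⟨f - c, ⟨sub_mem hf (coboundaries_le hc), fun a b => ?_, fun a b => ?_⟩, ?_⟩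
    · rw [LinearMap.sub_apply, LinearMap.sub_apply, hcv, hG, mul_assoc, mul_assoc, hee, hee, hf',
        hf' e (a * b) e]
      ring
    · rw [LinearMap.sub_apply, LinearMap.sub_apply, hcv, hG, ← mul_assoc, hee',
        mul_assoc (a * b), he, ← hf' a b e]
      ring
    · rw [map_sub, sub_eq_self]
      exact (Submodule.Quotient.mk_eq_zero _).2 hc
  exact (Submodule.finrank_mono hle).trans (Submodule.finrank_map_le _ _)

omit [SMulCommClass ℂ A A] [IsScalarTower ℂ A A] in
lemma one_le_finrank {U : Submodule ℂ A} {e : A} (he0 : e ≠ 0) (heU : e ∈ U) : 1 ≤ finrank ℂ U :=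
  Submodule.one_le_finrank_iff.2 fun h => he0 ((Submodule.mem_bot ℂ).1 (h ▸ heU))

omit [SMulCommClass ℂ A A] [IsScalarTower ℂ A A] in
lemma two_le_finrank {U : Submodule ℂ A} {e x : A} (he0 : e ≠ 0) (heU : e ∈ U) (hx : x ∈ U)
    (hxe : ∀ c : ℂ, x ≠ c • e) : 2 ≤ finrank ℂ U := by
  have hlt : Submodule.span ℂ {e} < U := by
    refine lt_of_le_of_ne ((Submodule.span_singleton_le_iff_mem _ _).2 heU) fun h => ?_
    rw [← h] at hx
    obtain ⟨c, hc⟩ := Submodule.mem_span_singleton.1 hx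
    exact hxe c hc.symm
  have := Submodule.finrank_lt_finrank_of_lt hlt
  rw [finrank_span_singleton he0] at this
  omega

lemma multDim_le_of_vanish {e : A} (he : e * e = e) {U U' : Submodule ℂ A} (k : ℕ)
    (h : ∀ f ∈ normCocycles e, ∀ u ∈ U, ∀ a, f u a = 0)
    (h' : ∀ f ∈ normCocycles e, ∀ u ∈ U', ∀ a, f a u = 0)
    (hU : k ≤ finrank ℂ U) (hU' : k ≤ finrank ℂ U') : multDim A ≤ (finrank ℂ A - k) ^ 2 := by
  rw [sq]
  exact (multDim_le_normCocycles he).trans ((finrank_le_of_vanish h h').trans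
    (Nat.mul_le_mul (by omega) (by omega)))

/-- Normalized cocycles vanish on the nonzero subspaces `eA` and `Ae`. -/
lemma multDim_le_of_idem {e : A} (he : e * e = e) (he0 : e ≠ 0) :
    multDim A ≤ (finrank ℂ A - 1) ^ 2 := by
  refine multDim_le_of_vanish he (U := LinearMap.range (LinearMap.mulLeft ℂ e))
    (U' := LinearMap.range (LinearMap.mulRight ℂ e)) 1 ?_ ?_
    (one_le_finrank he0 ⟨e, he⟩) (one_le_finrank he0 ⟨e, he⟩)
  · rintro f hf _ ⟨x, rfl⟩ a
    exact hf.2.1 x a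
  · rintro f hf _ ⟨x, rfl⟩ a
    exact hf.2.2 a x

/-- Unless `eA = Ae = ℂe`, cocycles can be normalized to live on a space of codimension two in
each argument. -/
lemma multDim_le_of_idem_of_ne {e : A} (he : e * e = e) (he0 : e ≠ 0)
    (hne : ¬ ((∀ a, ∃ c : ℂ, e * a = c • e) ∧ ∀ a, ∃ c : ℂ, a * e = c • e)) :
    multDim A ≤ (finrank ℂ A - 2) ^ 2 := by
  by_cases h1 : ∀ a, ∃ c : ℂ, e * a = c • e
  · have h2 : ¬ ∀ a, ∃ c : ℂ, a * e = c • e := fun h2 => hne ⟨h1, h2⟩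
    push Not at h2
    obtain ⟨x, hx⟩ := h2
    have hr := two_le_finrank (U := LinearMap.range (LinearMap.mulRight ℂ e)) he0 ⟨e, he⟩ ⟨x, rfl⟩ hx
    refine multDim_le_of_vanish he 2 ?_ ?_ hr hr
    · rintro f hf _ ⟨x, rfl⟩ a
      obtain ⟨c, hc⟩ := h1 a
      rw [LinearMap.mulRight_apply, mem_cocycles.1 hf.1, hc, map_smul, ← he, hf.2.2, smul_zero]
    · rintro f hf _ ⟨x, rfl⟩ a
      exact hf.2.2 a x
  · push Not at h1
    obtain ⟨x, hx⟩ := h1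
    have hl := two_le_finrank (U := LinearMap.range (LinearMap.mulLeft ℂ e)) he0 ⟨e, he⟩ ⟨x, rfl⟩ hx
    by_cases h2 : ∀ a, ∃ c : ℂ, a * e = c • e
    · refine multDim_le_of_vanish he 2 ?_ ?_ hl hl
      · rintro f hf _ ⟨x, rfl⟩ a
        exact hf.2.1 x a
      · rintro f hf _ ⟨x, rfl⟩ a
        obtain ⟨c, hc⟩ := h2 a
        rw [LinearMap.mulLeft_apply, ← mem_cocycles.1 hf.1, hc, map_smul, ← he, LinearMap.smul_apply,
          hf.2.1, smul_zero]
    · push Not at h2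
      obtain ⟨y, hy⟩ := h2
      have hr := two_le_finrank (U := LinearMap.range (LinearMap.mulRight ℂ e)) he0 ⟨e, he⟩
        ⟨y, rfl⟩ hy
      refine multDim_le_of_vanish he 2 ?_ ?_ hl hr
      · rintro f hf _ ⟨x, rfl⟩ a
        exact hf.2.1 x a
      · rintro f hf _ ⟨x, rfl⟩ a
        exact hf.2.2 a x

/-- `t(A) ≥ dim A + 1` unless `t(A) = 0`. Without nonzero idempotents this is the bound
`t(A) ≥ (dim A + 1) dim A'`; otherwise `t(A) ≥ 2 dim A - 1`. -/
lemma tInv_gap (hn : 2 ≤ finrank ℂ A) : tInv A = 0 ∨ (finrank ℂ A : ℤ) + 1 ≤ tInv A := by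
  have hz := finrank_cocycles_le (A := A)
  have hm := multDim_add (A := A)
  have hd := finrank_derived_le (A := A)
  by_cases h : ∀ e : A, e * e = e → e = 0
  · have h1 := finrank_cocycles_le_of_noIdem h
    have h2 := le_finrank_cocycles (A := A)
    rw [tInv_eq]
    generalize finrank ℂ A = n at *
    generalize finrank ℂ (derivedIdeal A) = d at *
    generalize finrank ℂ (Cocycles A) = z at *
    zify [hd] at *
    rcases Nat.eq_zero_or_pos d with rfl | hd0
    · left; push_cast at *; nlinarith
    · right
      have : (1 : ℤ) ≤ d := by exact_mod_cast hd0
      nlinarith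
  · push Not at h
    obtain ⟨e, he, he0⟩ := h
    right
    have h1 := multDim_le_of_idem he he0
    rw [tInv]
    generalize finrank ℂ A = n at *
    zify [show 1 ≤ n by omega] at *
    nlinarith

/-! ### The case `A = ℂe ⊕ N` -/

omit [FiniteDimensional ℂ A] in
/-- The two-sided annihilator of `e`; it is the complementary ideal when `eA = Ae = ℂe`. -/
def annih (e : A) : NonUnitalSubalgebra ℂ A where
  carrier := {a | e * a = 0 ∧ a * e = 0}
  add_mem' := by
    rintro a b ⟨h1, h2⟩ ⟨h3, h4⟩
    exact ⟨by rw [mul_add, h1, h3, add_zero], by rw [add_mul, h2, h4, add_zero]⟩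
  zero_mem' := ⟨mul_zero _, zero_mul _⟩
  mul_mem' := by
    rintro a b ⟨h1, h2⟩ ⟨h3, h4⟩
    exact ⟨by rw [← mul_assoc, h1, zero_mul], by rw [mul_assoc, h4, mul_zero]⟩
  smul_mem' := by
    rintro c a ⟨h1, h2⟩
    exact ⟨by rw [mul_smul_comm, h1, smul_zero], by rw [smul_mul_assoc, h2, smul_zero]⟩

omit [FiniteDimensional ℂ A] in
lemma mem_annih {e a : A} : a ∈ annih e ↔ e * a = 0 ∧ a * e = 0 := Iff.rfl

instance (N : NonUnitalSubalgebra ℂ A) : FiniteDimensional ℂ N :=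
  inferInstanceAs (FiniteDimensional ℂ N.toSubmodule)

/-- If `eA = Ae = ℂe`, then `A = ℂe ⊕ N` with `N` the annihilator of `e`, and `A` and `N` have
multipliers of the same dimension. -/
lemma multDim_eq_annih {e : A} (he : e * e = e) (he0 : e ≠ 0)
    (hl : ∀ a, ∃ c : ℂ, e * a = c • e) (hr : ∀ a, ∃ c : ℂ, a * e = c • e) :
    multDim A = multDim (annih e) ∧ finrank ℂ (annih e) + 1 = finrank ℂ A := by
  obtain ⟨ε₀, hε₀⟩ : ∃ φ : A →ₗ[ℂ] ℂ, φ e = 1 := by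
    by_contra! hcon
    refine he0 ((Module.forall_dual_apply_eq_zero_iff ℂ _).1 fun φ => ?_)
    by_contra h
    exact hcon ((φ e)⁻¹ • φ) (by simp [h])
  let ε : A →ₗ[ℂ] ℂ := ε₀.comp (LinearMap.mulLeft ℂ e)
  have hεl : ∀ a, e * a = ε a • e := by
    intro a
    obtain ⟨c, hc⟩ := hl a
    have : ε a = c := by
      change ε₀ (e * a) = c
      rw [hc, map_smul, hε₀, smul_eq_mul, mul_one]
    rw [hc, this]
  have hεr : ∀ a, a * e = ε a • e := by
    intro a
    obtain ⟨c, hc⟩ := hr a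
    have h1 : e * (a * e) = c • e := by rw [hc, mul_smul_comm, he]
    rw [← mul_assoc, hεl, smul_mul_assoc, he] at h1
    rw [hc, h1]
  have hεe : ε e = 1 := by
    change ε₀ (e * e) = 1
    rw [he, hε₀]
  have hεm : ∀ a b, ε (a * b) = ε a * ε b := by
    intro a b
    change ε₀ (e * (a * b)) = _
    rw [← mul_assoc, hεl, smul_mul_assoc, hεl, map_smul, map_smul, hε₀]
    simp
  have hmem : ∀ a, a ∈ annih e ↔ ε a = 0 := by
    intro a
    rw [mem_annih, hεl, hεr]
    simp [he0]
  have hπmem : ∀ a, a - ε a • e ∈ annih e := by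
    intro a
    rw [hmem, map_sub, map_smul, hεe]
    simp
  let π : A →ₗ[ℂ] annih e :=
    { toFun := fun a => ⟨a - ε a • e, hπmem a⟩
      map_add' := fun a b => by
        apply Subtype.ext
        change a + b - ε (a + b) • e = (a - ε a • e) + (b - ε b • e)
        rw [map_add, add_smul]
        abel
      map_smul' := fun c a => by
        apply Subtype.ext
        change c • a - ε (c • a) • e = c • (a - ε a • e)
        rw [map_smul, smul_sub, smul_smul, smul_eq_mul] }
  have hπ : ∀ a, (π a : A) = a - ε a • e := fun a => rfl
  have hπm : ∀ a b, π (a * b) = π a * π b := by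
    intro a b
    apply Subtype.ext
    change a * b - ε (a * b) • e = (a - ε a • e) * (b - ε b • e)
    rw [sub_mul, mul_sub, mul_sub, smul_mul_assoc, smul_mul_assoc, mul_smul_comm, mul_smul_comm,
      he, hεl, hεr, hεm, smul_smul, smul_smul, mul_comm (ε b) (ε a)]
    abel
  have hπN : ∀ x : annih e, π x = x := by
    intro x
    apply Subtype.ext
    rw [hπ, (hmem x).1 x.2, zero_smul, sub_zero]
  let ι : annih e →ₗ[ℂ] A := (annih e).toSubmodule.subtype
  have hι : ∀ x : annih e, ι x = (x : A) := fun x => rfl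
  let R : (A →ₗ[ℂ] A →ₗ[ℂ] ℂ) →ₗ[ℂ] (annih e →ₗ[ℂ] annih e →ₗ[ℂ] ℂ) :=
    { toFun := fun f => f.compl₁₂ ι ι
      map_add' := fun f g => by ext; simp
      map_smul' := fun c f => by ext; simp }
  have hR : ∀ f x y, R f x y = f x y := fun f x y => rfl
  let L : (annih e →ₗ[ℂ] annih e →ₗ[ℂ] ℂ) →ₗ[ℂ] (A →ₗ[ℂ] A →ₗ[ℂ] ℂ) :=
    { toFun := fun f => f.compl₁₂ π π
      map_add' := fun f g => by ext; simp
      map_smul' := fun c f => by ext; simp }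
  have hL : ∀ f x y, L f x y = f (π x) (π y) := fun f x y => rfl
  refine ⟨le_antisymm ?_ ?_, ?_⟩
  · refine finrank_map_mkQ_le coboundaries_le R ?_ ?_
    · intro f hf x y z
      exact mem_cocycles.1 hf x y z
    · rintro f hf ⟨g, hg⟩
      have hf' := mem_cocycles.1 hf
      refine ⟨g.comp π + f e e • ε, fun a b => ?_⟩
      have ha : a = (π a : A) + ε a • e := by rw [hπ]; abel
      have hb : b = (π b : A) + ε b • e := by rw [hπ]; abel
      have h1 : f (π a : A) e = 0 := by
        have := hf' (π a) e e
        rw [he, (mem_annih.1 (π a).2).2] at this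
        simpa using this.symm
      have h2 : f e (π b : A) = 0 := by
        have := hf' e e (π b)
        rw [he, (mem_annih.1 (π b).2).1] at this
        simpa using this
      have h3 := hg (π a) (π b)
      rw [hR] at h3
      have h4 : f a b = f (π a : A) (π b : A) + ε a * ε b * f e e := by
        conv_lhs => rw [ha, hb]
        simp only [map_add, LinearMap.add_apply, map_smul, LinearMap.smul_apply, h1, h2,
          smul_eq_mul]
        ring
      rw [h4, h3]
      change _ = g (π (a * b)) + f e e * ε (a * b)
      rw [hπm, hεm]
      ring
  · refine finrank_map_mkQ_le coboundaries_le L ?_ ?_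
    · intro f hf x y z
      rw [hL, hL, hπm, hπm]
      exact hf _ _ _
    · rintro f hf ⟨g, hg⟩
      refine ⟨g.comp ι, fun x y => ?_⟩
      have := hg x y
      rw [hL, hπN, hπN] at this
      exact this
  · have hker : (annih e).toSubmodule = LinearMap.ker ε := by
      ext a
      exact hmem a
    have hε0 : ε ≠ 0 := fun h => by simp [h] at hεe
    have := Module.Dual.finrank_ker_add_one_of_ne_zero (f := ε) hε0
    rw [← hker] at this
    exact this

/-- An algebra with a nonzero idempotent never has `t(A) = 10`: with `n = dim A`, either
`t(A) ≥ 4n - 4 > 10` or `t(A) = t(N) + 2n - 1` with `dim N = n - 1`, and then `t(N) = 0` makes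
`t(A)` odd, while `t(N) ≥ n` makes it too large. -/
lemma tInv_ne_of_idem {e : A} (he : e * e = e) (he0 : e ≠ 0) : tInv A ≠ 10 := by
  intro h10
  have hn : 4 ≤ finrank ℂ A := by
    by_contra! h
    have : (finrank ℂ A : ℤ) ^ 2 ≤ 9 := by
      have : finrank ℂ A ≤ 3 := by omega
      have : finrank ℂ A ^ 2 ≤ 3 ^ 2 := Nat.pow_le_pow_left this 2
      exact_mod_cast this
    rw [tInv] at h10
    omega
  by_cases hc : (∀ a, ∃ c : ℂ, e * a = c • e) ∧ ∀ a, ∃ c : ℂ, a * e = c • e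
  · obtain ⟨hM, hm⟩ := multDim_eq_annih he he0 hc.1 hc.2
    have hgap := tInv_gap (A := annih e) (by omega)
    rw [tInv] at h10 hgap
    rw [← hM] at hgap
    rw [← hm] at h10 hn
    generalize finrank ℂ (annih e) = m at *
    push_cast at h10
    have h3 : (3 : ℤ) ≤ m := by exact_mod_cast (by omega : 3 ≤ m)
    rcases hgap with h | h
    · have : 2 * (m : ℤ) + 1 = 10 := by linarith
      omega
    · linarith
  · have h1 := multDim_le_of_idem_of_ne he he0 hc
    rw [tInv] at h10
    generalize finrank ℂ A = n at *
    zify [show 2 ≤ n by omega] at *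
    nlinarith

/-! ### Algebras with one-dimensional derived ideal -/

omit [FiniteDimensional ℂ A] in
lemma mem_centerSub {z : A} : z ∈ centerSub A ↔ ∀ a : A, z * a = 0 ∧ a * z = 0 := Iff.rfl

omit [FiniteDimensional ℂ A] [SMulCommClass ℂ A A] [IsScalarTower ℂ A A] in
/-- A spanning vector of a one-dimensional derived ideal. -/
lemma exists_generator (hd : finrank ℂ (derivedIdeal A) = 1) :
    ∃ z ∈ derivedIdeal A, z ≠ 0 ∧ (∀ w ∈ derivedIdeal A, ∃ c : ℂ, w = c • z) ∧
      ∀ x y : A, ∃ c : ℂ, x * y = c • z := by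
  obtain ⟨z, hz0, hz⟩ := finrank_eq_one_iff'.1 hd
  have key : ∀ w ∈ derivedIdeal A, ∃ c : ℂ, w = c • (z : A) := by
    intro w hw
    obtain ⟨c, hc⟩ := hz ⟨w, hw⟩
    exact ⟨c, (congrArg Subtype.val hc).symm⟩
  exact ⟨z, z.2, fun h => hz0 (Subtype.ext h), key, fun x y => key _ (mul_mem_derived x y)⟩

omit [FiniteDimensional ℂ A] in
lemma derived_le_center (h : ∀ e : A, e * e = e → e = 0)
    (hd : finrank ℂ (derivedIdeal A) = 1) : derivedIdeal A ≤ centerSub A := by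
  obtain ⟨z, hz, hz0, hgen, hP⟩ := exists_generator hd
  have hzz : z * z = 0 := by
    obtain ⟨c, hc⟩ := hP z z
    by_cases hc0 : c = 0
    · rw [hc, hc0, zero_smul]
    · have := h (c⁻¹ • z) (by
        rw [smul_mul_assoc, mul_smul_comm, hc, smul_smul c⁻¹ c, inv_mul_cancel₀ hc0, one_smul])
      exact absurd this (smul_ne_zero (inv_ne_zero hc0) hz0)
  have hl : ∀ a, a * z = 0 := by
    intro a
    obtain ⟨c, hc⟩ := hP a z
    obtain ⟨c', hc'⟩ := hP a a
    have h1 : a * (a * z) = (c * c) • z := by rw [hc, mul_smul_comm, hc, smul_smul]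
    rw [← mul_assoc, hc', smul_mul_assoc, hzz, smul_zero] at h1
    have h2 : c * c = 0 := (smul_eq_zero.1 h1.symm).resolve_right hz0
    rw [hc, mul_self_eq_zero.1 h2, zero_smul]
  have hr : ∀ a, z * a = 0 := by
    intro a
    obtain ⟨c, hc⟩ := hP z a
    obtain ⟨c', hc'⟩ := hP a a
    have h1 : z * a * a = (c * c) • z := by rw [hc, smul_mul_assoc, hc, smul_smul]
    rw [mul_assoc, hc', mul_smul_comm, hzz, smul_zero] at h1
    have h2 : c * c = 0 := (smul_eq_zero.1 h1.symm).resolve_right hz0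
    rw [hc, mul_self_eq_zero.1 h2, zero_smul]
  intro w hw a
  obtain ⟨c, rfl⟩ := hgen w hw
  rw [smul_mul_assoc, mul_smul_comm, hl, hr, smul_zero]
  exact ⟨rfl, rfl⟩

omit [FiniteDimensional ℂ A] [SMulCommClass ℂ A A] in
/-- If `A'` is one-dimensional, then `A' = ℂz` for some product `z`, and the product of `A` is
`xy = ζ(xy) z` for a linear form `ζ` with `ζ(z) = 1`. -/
lemma exists_structure_form (hd : finrank ℂ (derivedIdeal A) = 1) :
    ∃ z ∈ derivedIdeal A, ∃ ζ : A →ₗ[ℂ] ℂ, ζ z = 1 ∧ (∀ w ∈ derivedIdeal A, w = ζ w • z) ∧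
      (∀ x y : A, x * y = ζ (x * y) • z) ∧ ∃ x y : A, x * y = z := by
  obtain ⟨z, hz, hz0, hgen, hP⟩ := exists_generator hd
  obtain ⟨ζ₀, hζ₀⟩ : ∃ φ : A →ₗ[ℂ] ℂ, φ z ≠ 0 := by
    by_contra! hcon
    exact hz0 ((Module.forall_dual_apply_eq_zero_iff ℂ _).1 hcon)
  have h1 : ((ζ₀ z)⁻¹ • ζ₀) z = 1 := by simp [hζ₀]
  have h2 : ∀ w ∈ derivedIdeal A, w = ((ζ₀ z)⁻¹ • ζ₀) w • z := by
    intro w hw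
    obtain ⟨c, rfl⟩ := hgen w hw
    rw [map_smul, h1, smul_eq_mul, mul_one]
  refine ⟨z, hz, _, h1, h2, fun x y => h2 _ (mul_mem_derived x y), ?_⟩
  obtain ⟨x, y, hxy⟩ : ∃ x y : A, x * y ≠ 0 := by
    by_contra! hcon
    have : derivedIdeal A = ⊥ := by
      rw [derivedIdeal, Submodule.span_eq_bot]
      rintro _ ⟨x, y, rfl⟩
      exact hcon x y
    rw [this] at hd
    simp at hd
  obtain ⟨c, hc⟩ := hP x y
  have hc0 : c ≠ 0 := by
    rintro rfl
    exact hxy (by rw [hc, zero_smul])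
  exact ⟨c⁻¹ • x, y, by rw [smul_mul_assoc, hc, smul_smul, inv_mul_cancel₀ hc0, one_smul]⟩

omit [FiniteDimensional ℂ A] [SMulCommClass ℂ A A] [IsScalarTower ℂ A A] in
/-- If `z = xy` spans `A'`, then a cocycle is determined on `A × A'` by its value at `(z, y)`, and
on `A' × A` by its value at `(x, z)`. -/
lemma cocycle_vanish_of_apply {z x y : A} {ζ : A →ₗ[ℂ] ℂ}
    (hP : ∀ x y : A, x * y = ζ (x * y) • z) (hxy : x * y = z)
    {f : A →ₗ[ℂ] A →ₗ[ℂ] ℂ} (hf : f ∈ Cocycles A) :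
    (∀ a, f a z = ζ (a * x) * f z y) ∧ (∀ b, f z b = f x z * ζ (y * b)) := by
  have hf' := mem_cocycles.1 hf
  constructor
  · intro a
    have := hf' a x y
    rw [hxy, hP a x, map_smul, LinearMap.smul_apply, smul_eq_mul] at this
    exact this.symm
  · intro b
    have := hf' x y b
    rw [hxy, hP y b, map_smul, smul_eq_mul] at this
    rw [this, mul_comm]

/-- If `A' = ℂz` with `z = xy`, and `A` has a cocycle not vanishing at `(x, z)`, then the center has
codimension one. -/
lemma finrank_center_of_cocycle {z x y : A} {ζ : A →ₗ[ℂ] ℂ}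
    (hP : ∀ x y : A, x * y = ζ (x * y) • z) (hxy : x * y = z)
    {f : A →ₗ[ℂ] A →ₗ[ℂ] ℂ} (hf : f ∈ Cocycles A) (hne : f x z ≠ 0) :
    finrank ℂ (centerSub A) + 1 = finrank ℂ A := by
  obtain ⟨hr, hl⟩ := cocycle_vanish_of_apply hP hxy hf
  have hf' := mem_cocycles.1 hf
  -- the cocycle identity on products, read off in `z`
  have key : ∀ a b c, ζ (a * b) * f z c = ζ (b * c) * f a z := by
    intro a b c
    have := hf' a b c
    rwa [hP a b, hP b c, map_smul, map_smul, LinearMap.smul_apply, smul_eq_mul,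
      smul_eq_mul] at this
  obtain ⟨c₀, hc₀⟩ : ∃ c, f z c ≠ 0 := by
    by_contra! hcon
    exact hne (by rw [hr, hcon, mul_zero])
  let r : A →ₗ[ℂ] ℂ := f.flip z
  have hrr : ∀ a, r a = f a z := fun a => rfl
  have hker : centerSub A = LinearMap.ker r := by
    ext a
    rw [LinearMap.mem_ker, hrr]
    constructor
    · intro ha
      rw [hr, (ha x).1]
      simp
    · intro ha b
      have h1 : ∀ b, ζ (a * b) = 0 := by
        intro b
        have := key a b c₀
        rw [ha, mul_zero] at this
        exact (mul_eq_zero.1 this).resolve_right hc₀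
      have h3 : ζ (b * a) = 0 := by
        have := key b a c₀
        rw [h1, zero_mul] at this
        exact (mul_eq_zero.1 this).resolve_right hc₀
      rw [hP a b, hP b a, h1, h3, zero_smul]
      exact ⟨rfl, rfl⟩
  have hr0 : r ≠ 0 := fun h => hne (by rw [← hrr, h, LinearMap.zero_apply])
  have := Module.Dual.finrank_ker_add_one_of_ne_zero (f := r) hr0
  rwa [← hker] at this

/-- Unless the center has codimension one, every cocycle factors through `A / A'`. -/
lemma finrank_cocycles_of_center_ne (hd : finrank ℂ (derivedIdeal A) = 1)
    (hc : finrank ℂ (centerSub A) + 1 ≠ finrank ℂ A) :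
    finrank ℂ (Cocycles A) = (finrank ℂ A - 1) ^ 2 := by
  obtain ⟨z, hz, ζ, hζ, hgen, hP, x, y, hxy⟩ := exists_structure_form hd
  refine le_antisymm ?_ ?_
  · rw [sq, ← hd]
    have h0 : ∀ f ∈ Cocycles A, f x z = 0 := by
      intro f hf
      by_contra hne
      exact hc (finrank_center_of_cocycle hP hxy hf hne)
    have hl : ∀ f ∈ Cocycles A, ∀ b, f z b = 0 := by
      intro f hf b
      rw [(cocycle_vanish_of_apply hP hxy hf).2, h0 f hf, zero_mul]
    refine finrank_le_of_vanish ?_ ?_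
    · intro f hf u hu a
      rw [hgen u hu, map_smul, LinearMap.smul_apply, hl f hf, smul_zero]
    · intro f hf u hu a
      rw [hgen u hu, map_smul, (cocycle_vanish_of_apply hP hxy hf).1, hl f hf, mul_zero, smul_zero]
  · rw [← hd]
    exact le_finrank_cocycles

lemma finrank_le_finrank_inf_ker {V : Type*} [AddCommGroup V] [Module ℂ V]
    [FiniteDimensional ℂ V] (S : Submodule ℂ V) (φ : V →ₗ[ℂ] ℂ) :
    finrank ℂ S ≤ finrank ℂ (S ⊓ LinearMap.ker φ : Submodule ℂ V) + 1 := by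
  have h1 := LinearMap.finrank_range_add_finrank_ker (φ.domRestrict S)
  have h2 : finrank ℂ (LinearMap.range (φ.domRestrict S)) ≤ 1 := by
    simpa using Submodule.finrank_le (LinearMap.range (φ.domRestrict S))
  have h3 : (LinearMap.ker (φ.domRestrict S)).map S.subtype ≤ S ⊓ LinearMap.ker φ := by
    rintro _ ⟨f, hf, rfl⟩
    exact ⟨f.2, hf⟩
  have h4 := Submodule.finrank_mono h3
  rw [Submodule.finrank_map_subtype_eq] at h4
  omega

/-- If the center has codimension one then `A` is the direct sum of `⟨x, x²⟩` and an abelian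
algebra, and has one cocycle that does not come from `A / A'`. -/
lemma finrank_cocycles_of_center_eq (hd : finrank ℂ (derivedIdeal A) = 1)
    (hZ : derivedIdeal A ≤ centerSub A)
    (hc : finrank ℂ (centerSub A) + 1 = finrank ℂ A) :
    finrank ℂ (Cocycles A) = (finrank ℂ A - 1) ^ 2 + 1 := by
  obtain ⟨z, hz, ζ, hζ, hgen, hP, x, y, hxy⟩ := exists_structure_form hd
  refine le_antisymm ?_ ?_
  · let φ : (A →ₗ[ℂ] A →ₗ[ℂ] ℂ) →ₗ[ℂ] ℂ :=
      (LinearMap.applyₗ z).comp (LinearMap.applyₗ x)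
    refine (finrank_le_finrank_inf_ker (Cocycles A) φ).trans (Nat.succ_le_succ ?_)
    rw [sq, ← hd]
    have hl : ∀ f ∈ Cocycles A ⊓ LinearMap.ker φ, ∀ b, f z b = 0 := by
      rintro f ⟨hf, h0⟩ b
      have h0' : f x z = 0 := h0
      rw [(cocycle_vanish_of_apply hP hxy hf).2, h0', zero_mul]
    refine finrank_le_of_vanish ?_ ?_
    · intro f hf u hu a
      rw [hgen u hu, map_smul, LinearMap.smul_apply, hl f hf, smul_zero]
    · intro f hf u hu a
      rw [hgen u hu, map_smul, (cocycle_vanish_of_apply hP hxy hf.1).1, hl f hf, mul_zero,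
        smul_zero]
  · obtain ⟨S, hS, hS0, hle⟩ := exists_le_cocycles (A := A)
    rw [hd] at hle
    refine Nat.succ_le_of_lt (hle.trans_lt (Submodule.finrank_lt_finrank_of_lt
      (lt_of_le_of_ne hS ?_)))
    have hx : x ∉ centerSub A := by
      intro hx
      rw [(hx y).1] at hxy
      rw [← hxy] at hζ
      simp at hζ
    obtain ⟨r, hrx, hr⟩ := Submodule.exists_le_ker_of_notMem hx
    have hr0 : r ≠ 0 := by
      rintro rfl
      exact hrx rfl
    have hker : centerSub A = LinearMap.ker r := by
      refine Submodule.eq_of_le_of_finrank_eq hr ?_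
      have := Module.Dual.finrank_ker_add_one_of_ne_zero (f := r) hr0
      exact Nat.add_right_cancel (hc.trans this.symm)
    have hdec : ∀ a, a - ((r x)⁻¹ * r a) • x ∈ centerSub A := by
      intro a
      rw [hker, LinearMap.mem_ker, map_sub, map_smul, smul_eq_mul]
      field_simp
      ring
    have hm : ∀ a b, a * b = (((r x)⁻¹ * r a) * ((r x)⁻¹ * r b)) • (x * x) := by
      intro a b
      have h1 := (hdec a b).1
      rw [sub_mul, sub_eq_zero] at h1
      have h2 := (hdec b x).2
      rw [mul_sub, sub_eq_zero] at h2
      rw [h1, smul_mul_assoc, h2, mul_smul_comm, smul_smul]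
    let f : A →ₗ[ℂ] A →ₗ[ℂ] ℂ :=
      (LinearMap.mul ℂ ℂ).compl₁₂ r ζ + (LinearMap.mul ℂ ℂ).compl₁₂ ζ r
    have hf : ∀ a b, f a b = r a * ζ b + ζ a * r b := fun a b => rfl
    have hrm : ∀ a b, r (a * b) = 0 := fun a b => hr (hZ (mul_mem_derived a b))
    have hfC : f ∈ Cocycles A := by
      rw [mem_cocycles]
      intro a b c
      rw [hf, hf, hrm, hrm, hm a b, hm b c, map_smul, map_smul, smul_eq_mul, smul_eq_mul]
      ring
    rintro rfl
    have h1 := hS0 f hfC z hz x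
    rw [hf, hζ, ← hxy, hrm, zero_mul, zero_add, one_mul] at h1
    exact hrx h1

/-- The case `dim A' = 1`, `A'` central. -/
lemma tInv_eq_ten_iff_of_derived (hd : finrank ℂ (derivedIdeal A) = 1)
    (hZ : derivedIdeal A ≤ centerSub A) :
    tInv A = 10 ↔ finrank ℂ A = 5 ∧ finrank ℂ (centerSub A) ≤ 3 := by
  have h1 : finrank ℂ (centerSub A) ≤ finrank ℂ A := Submodule.finrank_le _
  have h2 : finrank ℂ (centerSub A) ≠ finrank ℂ A := by
    intro h
    have htop := Submodule.eq_top_of_finrank_eq h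
    have : derivedIdeal A = ⊥ := by
      rw [derivedIdeal, Submodule.span_eq_bot]
      rintro _ ⟨x, y, rfl⟩
      have hx : x ∈ centerSub A := htop ▸ Submodule.mem_top
      exact (hx y).1
    rw [this] at hd
    simp at hd
  obtain ⟨m, hm⟩ : ∃ m, finrank ℂ A = m + 1 := ⟨finrank ℂ A - 1, by omega⟩
  rw [tInv_eq, hd]
  by_cases hc : finrank ℂ (centerSub A) + 1 = finrank ℂ A
  · rw [finrank_cocycles_of_center_eq hd hZ hc, hm, Nat.add_sub_cancel]
    rw [hm] at hc
    push_cast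
    constructor
    · intro h
      have : 2 * (m : ℤ) + 1 = 10 := by linarith
      omega
    · omega
  · rw [finrank_cocycles_of_center_ne hd hc, hm, Nat.add_sub_cancel]
    rw [hm] at hc h1 h2
    push_cast
    constructor
    · intro h
      have : 2 * (m : ℤ) + 2 = 10 := by linarith
      omega
    · rintro ⟨h, -⟩
      obtain rfl : m = 4 := by omega
      norm_num

/-! ### Splitting off an abelian summand -/

/-- A direct sum of an extra special algebra and an abelian one has `dim A' = 1`, with `A'`
inside the center. -/
lemma of_hasExtraSpecialDecomp {n k : ℕ} (h : HasExtraSpecialDecomp A n k) :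
    finrank ℂ A = n + k ∧ finrank ℂ (derivedIdeal A) = 1 ∧ derivedIdeal A ≤ centerSub A ∧
      finrank ℂ (centerSub A) = k + 1 := by
  obtain ⟨E, Z, hEZ, hZ, ⟨hc, h1⟩, hE, hk⟩ := h
  have hdec : ∀ a : A, ∃ x : E, ∃ z ∈ Z, a = x + z := by
    intro a
    obtain ⟨x, hx, z, hz, rfl⟩ :=
      Submodule.mem_sup.1 (hEZ.sup_eq_top ▸ Submodule.mem_top : a ∈ E.toSubmodule ⊔ Z)
    exact ⟨⟨x, hx⟩, z, hz, rfl⟩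
  have hmul : ∀ (x y : E), ∀ z ∈ Z, ∀ w ∈ Z, ((x : A) + z) * (y + w) = (x * y : E) := by
    intro x y z hz w hw
    rw [add_mul, (hZ z hz _).1, add_zero, mul_add, (hZ w hw _).2, add_zero]
    rfl
  let ι : E →ₗ[ℂ] A := E.toSubmodule.subtype
  have hι : ∀ x : E, ι x = (x : A) := fun x => rfl
  have hιinj : Function.Injective ι := Subtype.val_injective
  have hder : derivedIdeal A = (derivedIdeal E).map ι := by
    refine le_antisymm ?_ ?_
    · rw [derivedIdeal, Submodule.span_le]
      rintro _ ⟨a, b, rfl⟩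
      obtain ⟨x, z, hz, rfl⟩ := hdec a
      obtain ⟨y, w, hw, rfl⟩ := hdec b
      rw [hmul x y z hz w hw]
      exact Submodule.mem_map_of_mem (mul_mem_derived x y)
    · rw [derivedIdeal, Submodule.map_span, Submodule.span_le]
      rintro _ ⟨_, ⟨x, y, rfl⟩, rfl⟩
      exact mul_mem_derived (x : A) (y : A)
  have hcenE : (centerSub E).map ι ≤ centerSub A := by
    rintro _ ⟨x, hx, rfl⟩ b
    obtain ⟨y, w, hw, rfl⟩ := hdec b
    have e1 := hmul x y 0 Z.zero_mem w hw
    have e2 := hmul y x w hw 0 Z.zero_mem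
    rw [add_zero] at e1 e2
    rw [hι, e1, e2, (hx y).1, (hx y).2]
    exact ⟨rfl, rfl⟩
  have hcen : centerSub A = (centerSub E).map ι ⊔ Z := by
    refine le_antisymm ?_ (sup_le hcenE fun z hz => hZ z hz)
    intro a ha
    obtain ⟨x, z, hz, rfl⟩ := hdec a
    refine Submodule.add_mem_sup (Submodule.mem_map_of_mem (f := ι) (r := x) ?_) hz
    intro y
    have e1 := hmul x y z hz 0 Z.zero_mem
    have e2 := hmul y x 0 Z.zero_mem z hz
    rw [add_zero] at e1 e2
    exact ⟨Subtype.ext (e1.symm.trans (ha y).1), Subtype.ext (e2.symm.trans (ha y).2)⟩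
  have hdisj : (centerSub E).map ι ⊓ Z = ⊥ := by
    rw [eq_bot_iff]
    rintro _ ⟨⟨x, -, rfl⟩, hz⟩
    exact hEZ.disjoint.le_bot ⟨x.2, hz⟩
  have hfin := Submodule.finrank_add_eq_of_isCompl hEZ
  have hE' : finrank ℂ E.toSubmodule = n := hE
  have hme : finrank ℂ ((centerSub E).map ι) = 1 := by
    rw [← h1]
    exact (Submodule.equivMapOfInjective ι hιinj _).finrank_eq.symm
  have hsum := Submodule.finrank_sup_add_finrank_inf_eq ((centerSub E).map ι) Z
  rw [hdisj, finrank_bot, ← hcen, hme] at hsum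
  refine ⟨by omega, ?_, ?_, by omega⟩
  · rw [hder, ← hc, hme]
  · rw [hder, ← hc]
    exact hcenE

/-- If `A'` is one-dimensional and central then a complement of `A'` in the center splits off. -/
lemma hasExtraSpecialDecomp_of {n k : ℕ} (hn : finrank ℂ A = n + k)
    (hd : finrank ℂ (derivedIdeal A) = 1) (hZ : derivedIdeal A ≤ centerSub A)
    (hc : finrank ℂ (centerSub A) = k + 1) : HasExtraSpecialDecomp A n k := by
  obtain ⟨D, hD⟩ := (centerSub A).exists_isCompl
  obtain ⟨Y, hY⟩ := (derivedIdeal A).exists_isCompl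
  set Z : Submodule ℂ A := Y ⊓ centerSub A
  have hsup : derivedIdeal A ⊔ Z = centerSub A := by
    rw [← sup_inf_assoc_of_le Y hZ, hY.sup_eq_top, top_inf_eq]
  have hinf : derivedIdeal A ⊓ Z = ⊥ := by
    rw [← inf_assoc, hY.inf_eq_bot, bot_inf_eq]
  let E : NonUnitalSubalgebra ℂ A :=
    { (derivedIdeal A ⊔ D : Submodule ℂ A) with
      mul_mem' := fun {a b} _ _ => Submodule.mem_sup_left (mul_mem_derived a b) }
  have hE : E.toSubmodule = derivedIdeal A ⊔ D := rfl
  have hEmem : ∀ {a}, a ∈ E ↔ a ∈ derivedIdeal A ⊔ D := Iff.rfl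
  have htop : (derivedIdeal A ⊔ D) ⊔ Z = ⊤ := by
    rw [sup_right_comm, hsup, hD.sup_eq_top]
  have hEc : (derivedIdeal A ⊔ D) ⊓ centerSub A = derivedIdeal A := by
    rw [sup_inf_assoc_of_le D hZ, inf_comm, hD.inf_eq_bot, sup_bot_eq]
  have hcompl : IsCompl E.toSubmodule Z := by
    rw [hE]
    refine ⟨?_, codisjoint_iff.2 htop⟩
    rw [disjoint_iff, eq_bot_iff, ← hinf]
    rintro a ⟨h1, h2⟩
    exact ⟨hEc.le ⟨h1, h2.2⟩, h2⟩
  have hfin := Submodule.finrank_add_eq_of_isCompl hcompl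
  have hsum := Submodule.finrank_sup_add_finrank_inf_eq (derivedIdeal A) Z
  rw [hsup, hinf, finrank_bot, hd] at hsum
  have hdec : ∀ a : A, ∃ x : E, ∃ z ∈ Z, a = x + z := by
    intro a
    obtain ⟨x, hx, z, hz, rfl⟩ := Submodule.mem_sup.1 (htop ▸ Submodule.mem_top :
      a ∈ (derivedIdeal A ⊔ D) ⊔ Z)
    exact ⟨⟨x, hx⟩, z, hz, rfl⟩
  let ι : E →ₗ[ℂ] A := E.toSubmodule.subtype
  have hι : ∀ x : E, ι x = (x : A) := fun x => rfl
  have hιinj : Function.Injective ι := Subtype.val_injective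
  have hder : (derivedIdeal E).map ι = derivedIdeal A := by
    refine le_antisymm ?_ ?_
    · rw [derivedIdeal, Submodule.map_span, Submodule.span_le]
      rintro _ ⟨_, ⟨x, y, rfl⟩, rfl⟩
      exact mul_mem_derived (x : A) (y : A)
    · conv_lhs => rw [derivedIdeal]
      rw [Submodule.span_le]
      rintro _ ⟨a, b, rfl⟩
      obtain ⟨x, z, hz, rfl⟩ := hdec a
      obtain ⟨y, w, hw, rfl⟩ := hdec b
      rw [add_mul, (hz.2 _).1, add_zero, mul_add, (hw.2 _).2, add_zero]
      exact Submodule.mem_map_of_mem (f := ι) (mul_mem_derived x y)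
  have hcen : (centerSub E).map ι = derivedIdeal A := by
    refine le_antisymm ?_ ?_
    · rintro _ ⟨x, hx, rfl⟩
      refine hEc.le ⟨x.2, fun b => ?_⟩
      obtain ⟨y, w, hw, rfl⟩ := hdec b
      rw [hι, mul_add, add_mul, (hw.2 _).1, (hw.2 _).2, add_zero, add_zero]
      exact ⟨congrArg Subtype.val (hx y).1, congrArg Subtype.val (hx y).2⟩
    · intro a ha
      refine ⟨⟨a, Submodule.mem_sup_left ha⟩, fun y => ?_, rfl⟩
      exact ⟨Subtype.ext (hZ ha y).1, Subtype.ext (hZ ha y).2⟩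
  refine ⟨E, Z, hcompl, fun z hz => hz.2, ⟨?_, ?_⟩, ?_, by omega⟩
  · exact Submodule.map_injective_of_injective hιinj (hcen.trans hder.symm)
  · rw [← hd, ← hcen]
    exact (Submodule.equivMapOfInjective ι hιinj _).finrank_eq
  · change finrank ℂ E.toSubmodule = n
    omega

/-- Without nonzero idempotents, `t(A) = 10` forces `dim A' = 1`. If `dim A' ≥ 2`, then
`(dim A + 1) dim A' ≤ t(A) = 10` leaves only small cases. -/
lemma finrank_derived_eq_one (h : ∀ e : A, e * e = e → e = 0) (ht : tInv A = 10) :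
    finrank ℂ (derivedIdeal A) = 1 := by
  have h1 := finrank_cocycles_le_of_noIdem h
  have h2 := le_finrank_cocycles (A := A)
  have h3 := finrank_cocycles_ne h
  have h4 := finrank_derived_le (A := A)
  have h5 : finrank ℂ (derivedIdeal A) ≤ finrank ℂ (Cocycles A) := by
    rw [← multDim_add]
    exact Nat.le_add_left _ _
  rw [tInv_eq] at ht
  generalize finrank ℂ (derivedIdeal A) = d at *
  generalize finrank ℂ (Cocycles A) = c at *
  generalize finrank ℂ A = n at *
  obtain ⟨m, rfl⟩ := Nat.exists_eq_add_of_le h4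
  rw [Nat.add_sub_cancel_left] at h1 h2
  by_contra hne
  zify at h1 h2
  push_cast at ht
  rcases Nat.eq_zero_or_pos d with rfl | hpos
  · push_cast at *
    nlinarith
  · have hd2 : 2 ≤ d := by omega
    have hd2' : (2 : ℤ) ≤ d := by exact_mod_cast hd2
    have hle : ((d : ℤ) + m + 1) * d ≤ 10 := by nlinarith
    have hle' : (d + m + 1) * d ≤ 10 := by exact_mod_cast hle
    have hdm : d + m ≤ 4 := by
      by_contra! hcon
      nlinarith
    have hd4 : d ≤ 4 := by omega
    have hm4 : m ≤ 2 := by omega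
    -- only `dim A = 4`, `dim A' = 2` with eight-dimensional cocycles passes the linear bounds
    interval_cases d <;> interval_cases m <;> norm_num at * <;> omega

end Aux

/-- For a finite-dimensional nilpotent associative ℂ-algebra `A`,
`t(A) = 10` iff `A ≅ E(3) ⊕ A(2)`, or `A ≅ E(4) ⊕ A(1)`, or `A` is extra special of
dimension 5. -/
theorem tInv_eq_ten_iff (A : Type*) [NonUnitalRing A] [Module ℂ A] [SMulCommClass ℂ A A] [IsScalarTower ℂ A A]
    [FiniteDimensional ℂ A] (hnil : IsNilpotentAlgebra A) :
    tInv A = 10 ↔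
      (HasExtraSpecialDecomp A 3 2 ∨ HasExtraSpecialDecomp A 4 1 ∨
        (IsExtraSpecialAlg A ∧ Module.finrank ℂ A = 5)) := by
  constructor
  · intro ht
    have h : ∀ e : A, e * e = e → e = 0 := by
      intro e he
      by_contra he0
      exact tInv_ne_of_idem he he0 ht
    have hd := finrank_derived_eq_one h ht
    have hZ := derived_le_center h hd
    obtain ⟨hn, hc⟩ := (tInv_eq_ten_iff_of_derived hd hZ).1 ht
    have hle := Submodule.finrank_mono hZ
    rw [hd] at hle
    obtain hc | hc | hc : finrank ℂ (centerSub A) = 3 ∨ finrank ℂ (centerSub A) = 2 ∨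
        finrank ℂ (centerSub A) = 1 := by omega
    · exact Or.inl (hasExtraSpecialDecomp_of hn hd hZ hc)
    · exact Or.inr (Or.inl (hasExtraSpecialDecomp_of hn hd hZ hc))
    · exact Or.inr (Or.inr
        ⟨⟨(Submodule.eq_of_le_of_finrank_eq hZ (hd.trans hc.symm)).symm, hc⟩, hn⟩)
  · rintro (h | h | ⟨⟨h, hc⟩, hn⟩)
    · obtain ⟨hn, hd, hZ, hc⟩ := of_hasExtraSpecialDecomp h
      exact (tInv_eq_ten_iff_of_derived hd hZ).2 ⟨hn, by omega⟩
    · obtain ⟨hn, hd, hZ, hc⟩ := of_hasExtraSpecialDecomp h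
      exact (tInv_eq_ten_iff_of_derived hd hZ).2 ⟨hn, by omega⟩
    · exact (tInv_eq_ten_iff_of_derived (by rw [← h, hc]) h.ge).2 ⟨hn, by omega⟩
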